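/- arXiv:2210.14545 — 3 statements merged into one kernel-verified Lean document; each statement's English description precedes it below -/
import Mathlib

section
/- Let Q ≥ 1, K ≥ 1, feature vectors z_1,…,z_Q ∈ ℝ^d, prototypes w_1,…,w_K ∈ ℝ^d, and assignment weights u_{n,k} ≥ 0 with Σ_{k=1}^K u_{n,k} = 1 for every n ∈ {1,…,Q}. Set û_k = (1/Q) Σ_{n=1}^Q u_{n,k} and assume û_k > 0 for every k. Define the posterior probabilities p_{n,k} = û_k exp(−(1/2)‖w_k − z_n‖²) / Σ_{j=1}^K û_j exp(−(1/2)‖w_j − z_n‖²). Then the following identity holds: (1/2) Σ_{k=1}^K Σ_{n=1}^Q u_{n,k} ‖w_k − z_n‖² = − Σ_{k=1}^K Σ_{n=1}^Q u_{n,k} ln p_{n,k} + Q Σ_{k=1}^K û_k ln û_k − Σ_{n=1}^Q ln( Σ_{j=1}^K û_j exp(−(1/2)‖w_j − z_n‖²) ). In particular, the probabilistic K-means data-fitting term decomposes into a posterior cross-entropy term plus the hidden class-balance term Q Σ_k û_k ln û_k, minus a log-partition term. -/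
/-!
Taking logarithms in Bayes' rule gives `-log L = -log p + log π - log Z` for a likelihood `L`,
posterior `p`, prior `π` and evidence `Z`. Average this over the classes with weights `u n ·` and
sum over the samples `n`. The evidence term is constant in the class, and the weights sum to `1`;
the prior term sees `u` only through the class masses `∑ n, u n k`, so it becomes `Q` times
`∑ k, û k * log (û k)` once the prior is `û` itself. Classes of prior `0` are harmless: with `û` as
prior, `û k = 0` forces `u n k = 0` for every `n`, so the undefined logarithms have weight `0`.
-/

open Finset Real

section Bayes

variable {κ : Type*} [Fintype κ] {prior likelihood u : κ → ℝ}

/-- The evidence (normalising constant) in Bayes' rule for finitely many classes. The likelihood is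
a function of the class only, the observation being fixed. -/
noncomputable def bayesEvidence (prior likelihood : κ → ℝ) : ℝ :=
  ∑ j, prior j * likelihood j

/-- The posterior probability of class `k` given by Bayes' rule, with the observation fixed as in
`bayesEvidence`. -/
noncomputable def bayesPosterior (prior likelihood : κ → ℝ) (k : κ) : ℝ :=
  prior k * likelihood k / bayesEvidence prior likelihood

theorem bayesEvidence_pos (hprior : ∀ k, 0 ≤ prior k) (hlik : ∀ k, 0 < likelihood k)
    (hex : ∃ k, prior k ≠ 0) : 0 < bayesEvidence prior likelihood := by
  obtain ⟨k, hk⟩ := hex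
  exact sum_pos' (fun j _ => mul_nonneg (hprior j) (hlik j).le)
    ⟨k, mem_univ k, mul_pos ((hprior k).lt_of_ne' hk) (hlik k)⟩

theorem log_bayesPosterior {k : κ} (hprior : prior k ≠ 0) (hlik : likelihood k ≠ 0)
    (hev : bayesEvidence prior likelihood ≠ 0) :
    log (bayesPosterior prior likelihood k) =
      log (prior k) + log (likelihood k) - log (bayesEvidence prior likelihood) := by
  rw [bayesPosterior, log_div (mul_ne_zero hprior hlik) hev, log_mul hprior hlik]

theorem neg_sum_mul_log_likelihood (hprior : ∀ k, 0 ≤ prior k) (hlik : ∀ k, 0 < likelihood k)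
    (hsum : ∑ k, u k = 1) (hsupp : ∀ k, u k ≠ 0 → prior k ≠ 0) :
    -∑ k, u k * log (likelihood k) =
      -∑ k, u k * log (bayesPosterior prior likelihood k) + ∑ k, u k * log (prior k)
        - log (bayesEvidence prior likelihood) := by
  obtain ⟨k₀, -, hk₀⟩ : ∃ k ∈ univ, u k ≠ 0 :=
    exists_ne_zero_of_sum_ne_zero (hsum ▸ one_ne_zero)
  have hev : bayesEvidence prior likelihood ≠ 0 :=
    (bayesEvidence_pos hprior hlik ⟨k₀, hsupp k₀ hk₀⟩).ne'
  have hbayes (k : κ) : u k * log (bayesPosterior prior likelihood k) =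
      u k * log (prior k) + u k * log (likelihood k)
        - u k * log (bayesEvidence prior likelihood) := by
    rcases eq_or_ne (u k) 0 with hk | hk
    · simp [hk]
    · rw [log_bayesPosterior (hsupp k hk) (hlik k).ne' hev]
      ring
  simp only [hbayes, sum_sub_distrib, sum_add_distrib, ← sum_mul, hsum]
  ring

end Bayes

section ClassProportion

variable {ι κ : Type*} [Fintype ι] {u : ι → κ → ℝ}

/-- The empirical proportion `û k` of class `k` under the soft assignments `u`, where `u n k` is the
weight with which sample `n` is assigned to class `k`; it is `0` if there are no samples. -/
noncomputable def classProportion (u : ι → κ → ℝ) (k : κ) : ℝ :=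
  (1 / Fintype.card ι : ℝ) * ∑ n, u n k

theorem card_mul_classProportion (u : ι → κ → ℝ) (k : κ) :
    (Fintype.card ι : ℝ) * classProportion u k = ∑ n, u n k := by
  cases isEmpty_or_nonempty ι
  · simp
  · rw [classProportion, one_div, mul_inv_cancel_left₀ (by simp)]

theorem classProportion_nonneg {k : κ} (hu : ∀ n, 0 ≤ u n k) : 0 ≤ classProportion u k :=
  mul_nonneg (by positivity) (sum_nonneg fun n _ => hu n)

theorem classProportion_ne_zero {n : ι} {k : κ} (hu : ∀ n, 0 ≤ u n k) (hnk : u n k ≠ 0) :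
    classProportion u k ≠ 0 := by
  intro hzero
  have hmass : ∑ n, u n k = 0 := by rw [← card_mul_classProportion, hzero, mul_zero]
  exact hnk ((sum_eq_zero_iff_of_nonneg fun n _ => hu n).mp hmass n (mem_univ n))

theorem sum_sum_mul_eq_card_mul_sum_classProportion_mul [Fintype κ] (u : ι → κ → ℝ) (f : κ → ℝ) :
    ∑ n, ∑ k, u n k * f k = (Fintype.card ι : ℝ) * ∑ k, classProportion u k * f k := by
  rw [sum_comm, mul_sum]
  simp only [← sum_mul, ← mul_assoc, card_mul_classProportion]

end ClassProportion

theorem kmeans_hidden_class_balance_general {ι κ : Type*} [Fintype ι] [Fintype κ]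
    {likelihood u : ι → κ → ℝ} (hlik : ∀ n k, 0 < likelihood n k)
    (hu : ∀ n k, 0 ≤ u n k) (hsum : ∀ n, ∑ k, u n k = 1) :
    -∑ k, ∑ n, u n k * log (likelihood n k) =
      -∑ k, ∑ n, u n k * log (bayesPosterior (classProportion u) (likelihood n) k)
        + (Fintype.card ι : ℝ) * ∑ k, classProportion u k * log (classProportion u k)
        - ∑ n, log (bayesEvidence (classProportion u) (likelihood n)) := by
  have hsample (n : ι) := neg_sum_mul_log_likelihood
    (fun k => classProportion_nonneg fun m => hu m k) (hlik n) (hsum n)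
    fun k => classProportion_ne_zero fun m => hu m k
  rw [sum_comm, sum_comm (s := univ (α := κ)),
    ← sum_sum_mul_eq_card_mul_sum_classProportion_mul]
  simp only [← sum_neg_distrib, ← sum_add_distrib, ← sum_sub_distrib] at hsample ⊢
  exact sum_congr rfl fun n _ => hsample n

/-- Decomposition of the probabilistic K-means data-fitting term: with class proportions
`û_k = (1/Q) Σ_n u_{n,k} > 0` and Bayes posteriors
`p_{n,k} = û_k e^{−(1/2)‖w_k − z_n‖²} / Σ_j û_j e^{−(1/2)‖w_j − z_n‖²}`, one has
`(1/2) Σ_k Σ_n u_{n,k} ‖w_k − z_n‖² = −Σ_k Σ_n u_{n,k} ln p_{n,k}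
 + Q Σ_k û_k ln û_k − Σ_n ln(Σ_j û_j e^{−(1/2)‖w_j − z_n‖²})`. -/
theorem kmeans_hidden_class_balance (Q K d : ℕ) (hQ : 1 ≤ Q) (hK : 1 ≤ K)
    (z : Fin Q → EuclideanSpace ℝ (Fin d)) (w : Fin K → EuclideanSpace ℝ (Fin d))
    (u : Fin Q → Fin K → ℝ) (hu : ∀ n k, 0 ≤ u n k) (hsum : ∀ n, ∑ k, u n k = 1)
    (uhat : Fin K → ℝ) (huhat : ∀ k, uhat k = (1 / Q : ℝ) * ∑ n, u n k)
    (hpos : ∀ k, 0 < uhat k)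
    (p : Fin Q → Fin K → ℝ)
    (hp : ∀ n k, p n k = uhat k * Real.exp (-(1 / 2) * ‖w k - z n‖ ^ 2) /
        ∑ j, uhat j * Real.exp (-(1 / 2) * ‖w j - z n‖ ^ 2)) :
    (1 / 2) * ∑ k, ∑ n, u n k * ‖w k - z n‖ ^ 2 =
      -(∑ k, ∑ n, u n k * Real.log (p n k))
        + (Q : ℝ) * ∑ k, uhat k * Real.log (uhat k)
        - ∑ n, Real.log (∑ j, uhat j * Real.exp (-(1 / 2) * ‖w j - z n‖ ^ 2)) := by
  obtain rfl : uhat = classProportion u := funext fun k => by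
    rw [huhat, classProportion, Fintype.card_fin]
  obtain rfl : p = fun n => bayesPosterior (classProportion u)
      fun k => exp (-(1 / 2) * ‖w k - z n‖ ^ 2) := funext₂ hp
  have hdata : (1 / 2) * ∑ k, ∑ n, u n k * ‖w k - z n‖ ^ 2 =
      -∑ k, ∑ n, u n k * log (exp (-(1 / 2) * ‖w k - z n‖ ^ 2)) := by
    simp only [log_exp, neg_mul, mul_neg, sum_neg_distrib, neg_neg, mul_left_comm (u _ _), mul_sum]
  simpa only [hdata, Fintype.card_fin, bayesEvidence] using
    kmeans_hidden_class_balance_general (fun _ _ => exp_pos _) hu hsum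
end

section
/- Fix integers Q ≥ 1, N ≥ Q, K ≥ 1, reals λ > 0 and ε > 0, features z_1,…,z_N ∈ ℝ^d, and one-hot labels y_n ∈ {0,1}^K for n ∈ {Q+1,…,N} such that each class k has at least one n with y_{n,k} = 1. Let C = { U = (u_1,…,u_N) : u_n ∈ Δ_K for n ≤ Q, and u_n = y_n for n > Q }, let 𝕍_ε = [1 + ln ε, 1 + ln(1+ε)]^K, and define for (U, W, V) ∈ C × (ℝ^d)^K × 𝕍_ε the function F̃(U,W,V) = (1/2) Σ_{k=1}^K Σ_{n=1}^N u_{n,k} ‖w_k − z_n‖² + λ Σ_{k=1}^K e^{v_k − 1} − λ Σ_{k=1}^K v_k ( (1/Q) Σ_{n=1}^Q u_{n,k} + ε ) + Σ_{n=1}^N Σ_{k=1}^K u_{n,k} ln u_{n,k} (with 0·ln 0 = 0). Then for every r ∈ ℝ the sublevel set { (U,W,V) ∈ C × (ℝ^d)^K × 𝕍_ε : F̃(U,W,V) ≤ r } is compact. -/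
/-!
Apart from the clustering energy, the objective depends continuously on `(U, V)`, which ranges over
a compact set, so it is bounded below there; on a sublevel set the clustering energy is therefore
bounded above. Since every class has positive mass, uniformly so by compactness, some `z n` must be
within a fixed distance of `w k`: the smallest squared distance is at most the weighted average.
Hence each `w k` stays in a finite union of closed balls, which is compact.
-/

open Finset

theorem exists_le_div_of_sum_mul_le {ι : Type*} [Fintype ι] {a f : ι → ℝ} (ha : ∀ n, 0 ≤ a n)
    (hf : ∀ n, 0 ≤ f n) {c δ : ℝ} (hδ : 0 < δ) (hδa : δ ≤ ∑ n, a n) (h : ∑ n, a n * f n ≤ c) :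
    ∃ n, f n ≤ c / δ := by
  have hconcave : ConcaveOn ℝ Set.univ (id : ℝ → ℝ) := concaveOn_id convex_univ
  obtain ⟨n, -, hn⟩ := hconcave.exists_le_of_centerMass (t := univ) (p := f)
    (fun n _ => ha n) (hδ.trans_le hδa) fun _ _ => Set.mem_univ _
  refine ⟨n, hn.trans ?_⟩
  have hsum : 0 ≤ ∑ n, a n * f n := sum_nonneg fun n _ => mul_nonneg (ha n) (hf n)
  calc univ.centerMass a f = (∑ n, a n * f n) / ∑ n, a n := by
        simp only [centerMass, smul_eq_mul, div_eq_inv_mul]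
    _ ≤ c / δ := div_le_div₀ (hsum.trans h) h hδ hδa

section ClusterEnergy

variable {ι κ X Y : Type*} [Fintype ι] [Fintype κ] [PseudoMetricSpace X]

/-- The weighted clustering energy of the centroids `w` for the points `z`, where `u n k` is the
weight with which the point `z n` is assigned to the class `k`. -/
noncomputable def clusterEnergy (z : ι → X) (u : ι → κ → ℝ) (w : κ → X) : ℝ :=
  (1 / 2) * ∑ k, ∑ n, u n k * dist (w k) (z n) ^ 2

theorem continuous_clusterEnergy (z : ι → X) :
    Continuous fun p : (ι → κ → ℝ) × (κ → X) => clusterEnergy z p.1 p.2 := by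
  unfold clusterEnergy
  fun_prop

theorem sum_mul_sq_dist_le_two_mul_clusterEnergy (z : ι → X) {u : ι → κ → ℝ}
    (hu : ∀ n k, 0 ≤ u n k) (w : κ → X) (k : κ) :
    ∑ n, u n k * dist (w k) (z n) ^ 2 ≤ 2 * clusterEnergy z u w := by
  have hnonneg : ∀ j, 0 ≤ ∑ n, u n j * dist (w j) (z n) ^ 2 := fun j =>
    sum_nonneg fun n _ => mul_nonneg (hu n j) (sq_nonneg _)
  calc ∑ n, u n k * dist (w k) (z n) ^ 2
      ≤ ∑ j, ∑ n, u n j * dist (w j) (z n) ^ 2 :=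
        single_le_sum (f := fun j => ∑ n, u n j * dist (w j) (z n) ^ 2)
          (fun j _ => hnonneg j) (mem_univ k)
    _ = 2 * clusterEnergy z u w := by rw [clusterEnergy]; ring

theorem exists_isCompact_forall_clusterEnergy_le_imp_mem [ProperSpace X] (z : ι → X)
    {C : Set (ι → κ → ℝ)} (hC : IsCompact C) (hnonneg : ∀ u ∈ C, ∀ n k, 0 ≤ u n k)
    (hmass : ∀ u ∈ C, ∀ k, 0 < ∑ n, u n k) (c : ℝ) :
    ∃ D : Set (κ → X), IsCompact D ∧ ∀ u ∈ C, ∀ w, clusterEnergy z u w ≤ c → w ∈ D := by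
  have hmass_unif : ∀ k, ∃ δ > 0, ∀ u ∈ C, δ ≤ ∑ n, u n k := fun k =>
    hC.exists_forall_le' (by fun_prop) fun u hu => hmass u hu k
  choose δ hδ hδmass using hmass_unif
  refine ⟨Set.univ.pi fun k => ⋃ n, Metric.closedBall (z n) √(2 * c / δ k),
    isCompact_univ_pi fun k => isCompact_iUnion fun n => isCompact_closedBall _ _,
    fun u hu w hw k _ => ?_⟩
  have henergy : ∑ n, u n k * dist (w k) (z n) ^ 2 ≤ 2 * c :=
    (sum_mul_sq_dist_le_two_mul_clusterEnergy z (hnonneg u hu) w k).trans (by gcongr)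
  obtain ⟨n, hn⟩ := exists_le_div_of_sum_mul_le (fun n => hnonneg u hu n k)
    (fun n => sq_nonneg (dist (w k) (z n))) (hδ k) (hδmass k u hu) henergy
  exact Set.mem_iUnion.2 ⟨n, Real.le_sqrt_of_sq_le hn⟩

theorem isCompact_setOf_clusterEnergy_add_le [ProperSpace X] [TopologicalSpace Y] (z : ι → X)
    {C : Set (ι → κ → ℝ)} (hC : IsCompact C) (hnonneg : ∀ u ∈ C, ∀ n k, 0 ≤ u n k)
    (hmass : ∀ u ∈ C, ∀ k, 0 < ∑ n, u n k) {V : Set Y} (hV : IsCompact V)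
    {g : (ι → κ → ℝ) × Y → ℝ} (hg : Continuous g) (r : ℝ) :
    IsCompact {p : (ι → κ → ℝ) × (κ → X) × Y |
      p.1 ∈ C ∧ p.2.2 ∈ V ∧ clusterEnergy z p.1 p.2.1 + g (p.1, p.2.2) ≤ r} := by
  obtain ⟨m, hm⟩ := (hC.prod hV).bddBelow_image hg.continuousOn
  obtain ⟨D, hD, hmem⟩ :=
    exists_isCompact_forall_clusterEnergy_le_imp_mem z hC hnonneg hmass (r - m)
  have henergy : Continuous fun p : (ι → κ → ℝ) × (κ → X) × Y => clusterEnergy z p.1 p.2.1 :=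
    (continuous_clusterEnergy z).comp (continuous_fst.prodMk continuous_snd.fst)
  have hclosed : IsClosed {p : (ι → κ → ℝ) × (κ → X) × Y |
      clusterEnergy z p.1 p.2.1 + g (p.1, p.2.2) ≤ r} :=
    isClosed_le (by fun_prop) continuous_const
  convert (hC.prod (hD.prod hV)).inter_right hclosed using 1
  ext ⟨u, w, v⟩
  refine ⟨fun ⟨hu, hv, hle⟩ => ⟨⟨hu, hmem u hu w ?_, hv⟩, hle⟩,
    fun ⟨⟨hu, _, hv⟩, hle⟩ => ⟨hu, hv, hle⟩⟩
  have hlower : m ≤ g (u, v) := hm ⟨(u, v), ⟨hu, hv⟩, rfl⟩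
  exact le_sub_iff_add_le.2 ((add_le_add_right hlower _).trans hle)

end ClusterEnergy

section Paddle

variable {ι κ X : Type*} [Fintype κ]

/-- The set `C` of PADDLE assignments: a point of the query set `S` is assigned to the classes by a
probability vector, any other point `n` by its label `y n`. -/
def paddleAssignments (S : Finset ι) (y : ι → κ → ℝ) : Set (ι → κ → ℝ) :=
  {u | ∀ n, (n ∈ S → u n ∈ stdSimplex ℝ κ) ∧ (n ∉ S → u n = y n)}

theorem isCompact_paddleAssignments (S : Finset ι) (y : ι → κ → ℝ) :
    IsCompact (paddleAssignments S y) := by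
  classical
  have hpi : paddleAssignments S y =
      Set.univ.pi fun n => if n ∈ S then stdSimplex ℝ κ else {y n} := by
    ext u
    refine (forall_congr' fun n => ?_).trans Set.mem_univ_pi.symm
    by_cases hn : n ∈ S <;> simp [hn]
  rw [hpi]
  refine isCompact_univ_pi fun n => ?_
  split_ifs
  exacts [isCompact_stdSimplex ℝ κ, isCompact_singleton]

theorem nonneg_of_mem_paddleAssignments {S : Finset ι} {y u : ι → κ → ℝ}
    (hy : ∀ n ∉ S, ∀ k, 0 ≤ y n k) (hu : u ∈ paddleAssignments S y) (n : ι) (k : κ) :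
    0 ≤ u n k := by
  by_cases hn : n ∈ S
  · exact ((hu n).1 hn).1 k
  · exact (hu n).2 hn ▸ hy n hn k

theorem sum_pos_of_mem_paddleAssignments [Fintype ι] {S : Finset ι} {y u : ι → κ → ℝ}
    (hy : ∀ n ∉ S, ∀ k, 0 ≤ y n k) (hu : u ∈ paddleAssignments S y) {k : κ}
    (hk : ∃ n ∉ S, 0 < y n k) : 0 < ∑ n, u n k := by
  obtain ⟨n, hn, hpos⟩ := hk
  exact sum_pos' (fun n _ => nonneg_of_mem_paddleAssignments hy hu n k)
    ⟨n, mem_univ n, (hu n).2 hn ▸ hpos⟩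

/-- The part of the PADDLE objective that does not involve the centroids: the dual form of the
class-proportion penalty, followed by the entropic barrier. The paper's class proportions correspond
to `α = 1 / Q`. -/
noncomputable def paddlePenalty [Fintype ι] (S : Finset ι) (α lam ε : ℝ)
    (q : (ι → κ → ℝ) × (κ → ℝ)) : ℝ :=
  lam * ∑ k, Real.exp (q.2 k - 1) - lam * ∑ k, q.2 k * (α * ∑ n ∈ S, q.1 n k + ε)
    + ∑ n, ∑ k, q.1 n k * Real.log (q.1 n k)

theorem continuous_paddlePenalty [Fintype ι] (S : Finset ι) (α lam ε : ℝ) :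
    Continuous (paddlePenalty S α lam ε : (ι → κ → ℝ) × (κ → ℝ) → ℝ) := by
  have hentropy : ∀ n k, Continuous fun q : (ι → κ → ℝ) × (κ → ℝ) =>
      q.1 n k * Real.log (q.1 n k) := fun n k =>
    Real.continuous_mul_log.comp ((continuous_apply_apply n k).comp continuous_fst)
  exact Continuous.add (by fun_prop)
    (continuous_finsetSum _ fun n _ => continuous_finsetSum _ fun k _ => hentropy n k)

theorem paddle_sublevel_compact_general [Fintype ι] [PseudoMetricSpace X] [ProperSpace X]
    (S : Finset ι) (α lam ε : ℝ) (z : ι → X) {y : ι → κ → ℝ} (hy : ∀ n ∉ S, ∀ k, 0 ≤ y n k)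
    (hcover : ∀ k, ∃ n ∉ S, 0 < y n k) {V : Set (κ → ℝ)} (hV : IsCompact V) (r : ℝ) :
    IsCompact {p : (ι → κ → ℝ) × (κ → X) × (κ → ℝ) | p.1 ∈ paddleAssignments S y ∧ p.2.2 ∈ V ∧
      clusterEnergy z p.1 p.2.1 + paddlePenalty S α lam ε (p.1, p.2.2) ≤ r} :=
  isCompact_setOf_clusterEnergy_add_le z (isCompact_paddleAssignments S y)
    (fun _ hu => nonneg_of_mem_paddleAssignments hy hu)
    (fun _ hu k => sum_pos_of_mem_paddleAssignments hy hu (hcover k)) hV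
    (continuous_paddlePenalty S α lam ε) r

end Paddle

/-- Compactness of the sublevel sets of the ε-regularized primal–dual PADDLE objective
`F̃(U,W,V)` over `C × (ℝ^d)^K × 𝕍_ε`, where `C` constrains query assignments to the
simplex and support assignments to the one-hot labels, `𝕍_ε = [1+ln ε, 1+ln(1+ε)]^K`,
and every class is represented in the support set. -/
theorem paddle_sublevel_compact (Q N K d : ℕ) (hQ : 1 ≤ Q) (hN : Q ≤ N) (hK : 1 ≤ K)
    (lam ε : ℝ) (hlam : 0 < lam) (hε : 0 < ε)
    (z : Fin N → EuclideanSpace ℝ (Fin d)) (y : Fin N → Fin K → ℝ)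
    (hy01 : ∀ n : Fin N, Q ≤ (n : ℕ) → ∀ k, y n k = 0 ∨ y n k = 1)
    (hysum : ∀ n : Fin N, Q ≤ (n : ℕ) → ∑ k, y n k = 1)
    (hcover : ∀ k, ∃ n : Fin N, Q ≤ (n : ℕ) ∧ y n k = 1)
    (r : ℝ) :
    IsCompact {p : (Fin N → Fin K → ℝ) × (Fin K → EuclideanSpace ℝ (Fin d)) × (Fin K → ℝ) |
      (∀ n : Fin N, ((n : ℕ) < Q → (∀ k, 0 ≤ p.1 n k) ∧ ∑ k, p.1 n k = 1) ∧
        (Q ≤ (n : ℕ) → p.1 n = y n)) ∧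
      (∀ k, p.2.2 k ∈ Set.Icc (1 + Real.log ε) (1 + Real.log (1 + ε))) ∧
      ((1 / 2) * ∑ k, ∑ n, p.1 n k * ‖p.2.1 k - z n‖ ^ 2
        + lam * ∑ k, Real.exp (p.2.2 k - 1)
        - lam * ∑ k, p.2.2 k *
            ((1 / Q : ℝ) * (∑ n ∈ Finset.univ.filter (fun n : Fin N => (n : ℕ) < Q), p.1 n k) + ε)
        + ∑ n, ∑ k, p.1 n k * Real.log (p.1 n k) ≤ r)} := by
  simpa [paddleAssignments, stdSimplex, clusterEnergy, paddlePenalty, dist_eq_norm, add_assoc,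
    add_sub_assoc, Pi.le_def, forall_and] using
    paddle_sublevel_compact_general (univ.filter fun n : Fin N => (n : ℕ) < Q) (1 / Q) lam ε z
      (fun n hn k => (hy01 n (by simpa using hn) k).elim Eq.ge fun h => h ▸ zero_le_one)
      (fun k => (hcover k).imp fun n ⟨hn, h⟩ => ⟨by simpa using hn, h ▸ one_pos⟩)
      (isCompact_Icc (a := fun _ => 1 + Real.log ε) (b := fun _ => 1 + Real.log (1 + ε))) r
end

section
/- Fix integers Q ≥ 1, N ≥ Q, K ≥ 1, reals λ > 0 and ε > 0, features z_1,…,z_N ∈ ℝ^d, one-hot labels y_n ∈ {0,1}^K for n ∈ {Q+1,…,N} with each class represented at least once, and initial points W^{(0)} ∈ (ℝ^d)^K, V^{(0)} = 0 ∈ ℝ^K. Define the iterates for ℓ = 1, 2, …: (i) u_n^{(ℓ)} = softmax( (−(1/2)‖w_k^{(ℓ−1)} − z_n‖² + (λ/Q) v_k^{(ℓ−1)})_{k=1,…,K} ) for n ≤ Q and u_n^{(ℓ)} = y_n for n > Q; (ii) v_k^{(ℓ)} = 1 + ln( (1/Q) Σ_{n=1}^{Q} u_{n,k}^{(ℓ)}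 + ε ) for each k; (iii) w_k^{(ℓ)} = ( Σ_{n=1}^N u_{n,k}^{(ℓ)} z_n ) / ( Σ_{n=1}^N u_{n,k}^{(ℓ)} ) for each k. Then these iterates are well defined (each denominator Σ_n u_{n,k}^{(ℓ)} is strictly positive), and the sequence (U^{(ℓ)}, W^{(ℓ)}, V^{(ℓ)})_{ℓ ≥ 1} is bounded: for every ℓ ≥ 1, each u_n^{(ℓ)} lies in the unit simplex Δ_K, each v_k^{(ℓ)} lies in the interval [1 + ln ε, 1 + ln(1+ε)], and each prototype w_k^{(ℓ)} lies in the convex hull of {z_1,…,z_N}. -/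
/-!
No induction on `ℓ` is needed: whatever the previous prototypes and dual variables are, softmax
outputs lie in the simplex, and so do the labels. The bounds at step `ℓ` then follow from the
assignments of that same step alone: the mean of numbers in `[0, 1]` stays in `[0, 1]`, which bounds
`v`, and `w_k` is a center of mass whose total weight is positive because some support sample of
class `k` keeps its label.
-/

open Finset
open scoped BigOperators

section Softmax

variable {κ : Type*} [Fintype κ]

/-- The softmax map, turning a family of scores into weights proportional to their exponentials. -/
noncomputable def softmax (x : κ → ℝ) (k : κ) : ℝ :=
  Real.exp (x k) / ∑ j, Real.exp (x j)

theorem softmax_mem_stdSimplex [Nonempty κ] (x : κ → ℝ) : softmax x ∈ stdSimplex ℝ κ := by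
  have htotal : 0 < ∑ j, Real.exp (x j) := sum_pos (fun j _ ↦ Real.exp_pos (x j)) univ_nonempty
  refine ⟨fun k ↦ div_nonneg (Real.exp_pos _).le htotal.le, ?_⟩
  simp only [softmax, ← sum_div, div_self htotal.ne']

end Softmax

theorem mem_stdSimplex_of_forall_eq_zero_or_eq_one {𝕜 κ : Type*} [Semiring 𝕜] [PartialOrder 𝕜]
    [ZeroLEOneClass 𝕜] [Fintype κ] {f : κ → 𝕜} (hf : ∀ k, f k = 0 ∨ f k = 1)
    (hsum : ∑ k, f k = 1) : f ∈ stdSimplex 𝕜 κ :=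
  ⟨fun k ↦ (hf k).elim (fun h ↦ h.ge) fun h ↦ h ▸ zero_le_one, hsum⟩

theorem log_add_mem_Icc {p ε : ℝ} (hε : 0 < ε) (hp : p ∈ Set.Icc 0 1) :
    Real.log (p + ε) ∈ Set.Icc (Real.log ε) (Real.log (1 + ε)) :=
  ⟨Real.log_le_log hε (le_add_of_nonneg_left hp.1),
    Real.log_le_log (add_pos_of_nonneg_of_pos hp.1 hε) (add_le_add_left hp.2 ε)⟩

section Paddle

variable {ι κ E : Type*} [Fintype ι] [Fintype κ] [SeminormedAddCommGroup E] [NormedSpace ℝ E]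

/-- `IsPaddleSequence s lam ε z y U W V` says that the assignments `U`, prototypes `W` and dual
variables `V` follow the `ε`-regularized PADDLE updates for the features `z`, from arbitrary `W 0`
and `V 0`. The query samples are those in `s`; the other samples are support samples, with (possibly
soft) labels `y`. The value `U 0` is unconstrained. -/
structure IsPaddleSequence (s : Finset ι) (lam ε : ℝ) (z : ι → E) (y : ι → κ → ℝ)
    (U : ℕ → ι → κ → ℝ) (W : ℕ → κ → E) (V : ℕ → κ → ℝ) : Prop where
  query : ∀ ℓ, ∀ n ∈ s,
    U (ℓ + 1) n = softmax fun k ↦ -(1 / 2) * ‖W ℓ k - z n‖ ^ 2 + (lam / #s) * V ℓ k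
  support : ∀ ℓ, ∀ n ∉ s, U (ℓ + 1) n = y n
  dual : ∀ ℓ k, V (ℓ + 1) k = 1 + Real.log ((𝔼 n ∈ s, U (ℓ + 1) n k) + ε)
  prototype : ∀ ℓ k, W (ℓ + 1) k = univ.centerMass (fun n ↦ U (ℓ + 1) n k) z

namespace IsPaddleSequence

variable {s : Finset ι} {lam ε : ℝ} {z : ι → E} {y : ι → κ → ℝ}
  {U : ℕ → ι → κ → ℝ} {W : ℕ → κ → E} {V : ℕ → κ → ℝ}

theorem assignment_mem_stdSimplex [Nonempty κ] (h : IsPaddleSequence s lam ε z y U W V)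
    (hy : ∀ n ∉ s, y n ∈ stdSimplex ℝ κ) (ℓ : ℕ) (n : ι) : U (ℓ + 1) n ∈ stdSimplex ℝ κ := by
  by_cases hn : n ∈ s
  · exact h.query ℓ n hn ▸ softmax_mem_stdSimplex _
  · exact h.support ℓ n hn ▸ hy n hn

theorem sum_assignment_pos (h : IsPaddleSequence s lam ε z y U W V) {ℓ : ℕ} {k : κ}
    (hU : ∀ n, 0 ≤ U (ℓ + 1) n k) (hcover : ∃ n ∉ s, 0 < y n k) : 0 < ∑ n, U (ℓ + 1) n k := by
  obtain ⟨n, hn, hnk⟩ := hcover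
  exact sum_pos' (fun m _ ↦ hU m) ⟨n, mem_univ n, by rwa [h.support ℓ n hn]⟩

theorem dual_mem_Icc (h : IsPaddleSequence s lam ε z y U W V) (hs : s.Nonempty) (hε : 0 < ε)
    {ℓ : ℕ} {k : κ} (hU : ∀ n ∈ s, U (ℓ + 1) n k ∈ Set.Icc 0 1) :
    V (ℓ + 1) k ∈ Set.Icc (1 + Real.log ε) (1 + Real.log (1 + ε)) := by
  have hmean : 𝔼 n ∈ s, U (ℓ + 1) n k ∈ Set.Icc (0 : ℝ) 1 :=
    ⟨le_expect hs fun n hn ↦ (hU n hn).1, expect_le hs fun n hn ↦ (hU n hn).2⟩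
  rw [h.dual]
  exact (log_add_mem_Icc hε hmean).imp (add_le_add_right · 1) (add_le_add_right · 1)

theorem prototype_mem_convexHull (h : IsPaddleSequence s lam ε z y U W V) {ℓ : ℕ} {k : κ}
    (hU : ∀ n, 0 ≤ U (ℓ + 1) n k) (hpos : 0 < ∑ n, U (ℓ + 1) n k) :
    W (ℓ + 1) k ∈ convexHull ℝ (Set.range z) := by
  rw [h.prototype]
  exact centerMass_mem_convexHull univ (fun n _ ↦ hU n) hpos fun n _ ↦ Set.mem_range_self n

end IsPaddleSequence

theorem paddle_iterates_bounded_general [Nonempty κ] {s : Finset ι} (hs : s.Nonempty)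
    {lam ε : ℝ} (hε : 0 < ε) {z : ι → E} {y : ι → κ → ℝ}
    (hy : ∀ n ∉ s, y n ∈ stdSimplex ℝ κ) (hcover : ∀ k, ∃ n ∉ s, 0 < y n k)
    {U : ℕ → ι → κ → ℝ} {W : ℕ → κ → E} {V : ℕ → κ → ℝ}
    (h : IsPaddleSequence s lam ε z y U W V) (ℓ : ℕ) :
    (∀ k, 0 < ∑ n, U (ℓ + 1) n k) ∧
      (∀ n, U (ℓ + 1) n ∈ stdSimplex ℝ κ) ∧
      (∀ k, V (ℓ + 1) k ∈ Set.Icc (1 + Real.log ε) (1 + Real.log (1 + ε))) ∧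
      (∀ k, W (ℓ + 1) k ∈ convexHull ℝ (Set.range z)) := by
  have hU := h.assignment_mem_stdSimplex hy ℓ
  have hpos k := h.sum_assignment_pos (fun n ↦ (hU n).1 k) (hcover k)
  exact ⟨hpos, hU, fun k ↦ h.dual_mem_Icc hs hε fun n _ ↦ mem_Icc_of_mem_stdSimplex (hU n) k,
    fun k ↦ h.prototype_mem_convexHull (fun n ↦ (hU n).1 k) (hpos k)⟩

end Paddle

/-- Well-definedness and boundedness of the (ε-regularized) PADDLE block coordinate
descent iterates: for every `ℓ ≥ 1`, the denominators `Σ_n u_{n,k}^{(ℓ)}` are strictly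
positive, each `u_n^{(ℓ)}` lies in the unit simplex `Δ_K`, each `v_k^{(ℓ)}` lies in
`[1 + ln ε, 1 + ln(1+ε)]`, and each prototype `w_k^{(ℓ)}` lies in the convex hull of
`{z_1, …, z_N}`. -/
theorem paddle_iterates_bounded (Q N K d : ℕ) (hQ : 1 ≤ Q) (hN : Q ≤ N) (hK : 1 ≤ K)
    (lam ε : ℝ) (hlam : 0 < lam) (hε : 0 < ε)
    (z : Fin N → EuclideanSpace ℝ (Fin d)) (y : Fin N → Fin K → ℝ)
    (hy01 : ∀ n : Fin N, Q ≤ (n : ℕ) → ∀ k, y n k = 0 ∨ y n k = 1)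
    (hysum : ∀ n : Fin N, Q ≤ (n : ℕ) → ∑ k, y n k = 1)
    (hcover : ∀ k, ∃ n : Fin N, Q ≤ (n : ℕ) ∧ y n k = 1)
    (U : ℕ → Fin N → Fin K → ℝ) (W : ℕ → Fin K → EuclideanSpace ℝ (Fin d))
    (V : ℕ → Fin K → ℝ)
    (hV0 : V 0 = 0)
    (hU : ∀ ℓ, 1 ≤ ℓ → ∀ n : Fin N,
      ((n : ℕ) < Q → ∀ k, U ℓ n k =
        Real.exp (-(1 / 2) * ‖W (ℓ - 1) k - z n‖ ^ 2 + (lam / Q) * V (ℓ - 1) k) /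
          ∑ j, Real.exp (-(1 / 2) * ‖W (ℓ - 1) j - z n‖ ^ 2 + (lam / Q) * V (ℓ - 1) j)) ∧
      (Q ≤ (n : ℕ) → U ℓ n = y n))
    (hVit : ∀ ℓ, 1 ≤ ℓ → ∀ k, V ℓ k = 1 + Real.log
        ((1 / Q : ℝ) * (∑ n ∈ Finset.univ.filter (fun n : Fin N => (n : ℕ) < Q), U ℓ n k) + ε))
    (hW : ∀ ℓ, 1 ≤ ℓ → ∀ k, W ℓ k = (∑ n, U ℓ n k)⁻¹ • ∑ n, U ℓ n k • z n) :
    ∀ ℓ, 1 ≤ ℓ →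
      (∀ k, 0 < ∑ n, U ℓ n k) ∧
      (∀ n, (∀ k, 0 ≤ U ℓ n k) ∧ ∑ k, U ℓ n k = 1) ∧
      (∀ k, V ℓ k ∈ Set.Icc (1 + Real.log ε) (1 + Real.log (1 + ε))) ∧
      (∀ k, W ℓ k ∈ convexHull ℝ (Set.range z)) := by
  have : Nonempty (Fin K) := ⟨⟨0, hK⟩⟩
  set s : Finset (Fin N) := univ.filter fun n ↦ (n : ℕ) < Q with hs
  have hcard : #s = Q := by rw [hs, Fin.card_filter_val_lt, min_eq_right hN]
  have mem_s (n : Fin N) : n ∈ s ↔ (n : ℕ) < Q := by simp [hs]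
  have notMem_s (n : Fin N) : n ∉ s ↔ Q ≤ (n : ℕ) := by simp [hs]
  have hpaddle : IsPaddleSequence s lam ε z y U W V :=
    { query := fun ℓ n hn ↦ funext fun k ↦ by
        simpa [softmax, hcard] using (hU (ℓ + 1) ℓ.succ_pos n).1 ((mem_s n).1 hn) k
      support := fun ℓ n hn ↦ (hU (ℓ + 1) ℓ.succ_pos n).2 ((notMem_s n).1 hn)
      dual := fun ℓ k ↦ by
        rw [hVit (ℓ + 1) ℓ.succ_pos, expect_eq_sum_div_card, hcard, one_div_mul_eq_div]
      prototype := fun ℓ ↦ hW (ℓ + 1) ℓ.succ_pos }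
  intro ℓ hℓ
  obtain ⟨ℓ, rfl⟩ := Nat.exists_eq_add_of_le' hℓ
  exact paddle_iterates_bounded_general (card_pos.1 (hcard ▸ hQ)) hε
    (fun n hn ↦ mem_stdSimplex_of_forall_eq_zero_or_eq_one (hy01 n ((notMem_s n).1 hn))
      (hysum n ((notMem_s n).1 hn)))
    (fun k ↦ (hcover k).imp fun n ⟨hn, hnk⟩ ↦ ⟨(notMem_s n).2 hn, hnk ▸ one_pos⟩) hpaddle ℓ
end
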